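/- Let (s_n)_{n ≥ 0} be a sequence of integers such that: there is a constant C with s_n ≤ C·n for all n ≥ 1; s_{n+1} ≥ s_n for all sufficiently large n; and s_n → ∞ as n → ∞. Then there exists a non-empty family 𝓕 of finite graphs, each having at least one edge, such that sat(n,𝓕) = s_n for all sufficiently large n. -/

import Mathlib

open SimpleGraph Filter Topology

/-- `H` (on `β`) is contained in `G` (on `α`): `G` has a subgraph isomorphic to `H`. -/
def Contains {α β : Type*} (G : SimpleGraph α) (H : SimpleGraph β) : Prop :=
  ∃ f : β ↪ α, ∀ a b : β, H.Adj a b → G.Adj (f a) (f b)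

/-- A family of finite graphs, each given on a vertex set `Fin n`. -/
abbrev GraphFam := Set ((n : ℕ) × SimpleGraph (Fin n))

/-- `G` is `𝓕`-saturated: `G` contains no member of `𝓕`, but adding any missing edge to `G`
creates a member of `𝓕`. -/
def FamSaturated (𝓕 : GraphFam) {α : Type*} (G : SimpleGraph α) : Prop :=
  (∀ F ∈ 𝓕, ¬ Contains G F.2) ∧
    ∀ u v : α, u ≠ v → ¬ G.Adj u v →
      ∃ F ∈ 𝓕, Contains (G ⊔ SimpleGraph.fromEdgeSet {s(u, v)}) F.2

/-- `sat n 𝓕` is the minimum number of edges in an `𝓕`-saturated graph on `n` vertices. -/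
noncomputable def sat (n : ℕ) (𝓕 : GraphFam) : ℕ :=
  sInf {m | ∃ G : SimpleGraph (Fin n), FamSaturated 𝓕 G ∧ Nat.card G.edgeSet = m}

/-!
Call a graph hosted at level `m` if, up to isolated vertices, it is a subgraph of one of the *hosts*
with at least `m` edges, and forbid the graphs on `n ≥ n₀` vertices that are not hosted at level
`s n`. As `s` is eventually monotone, the saturated graphs on `n` vertices are then the maximal
graphs hosted at level `s n`.

The hosts are the joins of a `t`-clique with two cycles and some isolated vertices. They form an
antichain and realize every large number of edges, so a host with `s n` edges, padded with isolated
vertices, is saturated. Conversely, moving one vertex of a maximal graph inside its host shows that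
this graph either contains the whole host or has `t` universal vertices. It thus has at least `s n`
edges: in the second case at least `t * (n - 1) / 2`, which bounds `s n = O(n)` if `t` is large.
-/

theorem card_edgeSet_top {α : Type*} [Finite α] :
    Nat.card (⊤ : SimpleGraph α).edgeSet = (Nat.card α).choose 2 := by
  classical
  have := Fintype.ofFinite α
  rw [Nat.card_eq_fintype_card, ← edgeFinset_card, card_edgeFinset_top_eq_card_choose_two,
    Nat.card_eq_fintype_card]

section Saturation

theorem contains_iff_isContained {α β : Type*} {G : SimpleGraph α} {H : SimpleGraph β} :
    Contains G H ↔ H ⊑ G :=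
  ⟨fun ⟨f, hf⟩ => ⟨⟨f, hf _ _⟩, f.injective⟩,
    fun ⟨f⟩ => ⟨f.toEmbedding, fun _ _ => f.toHom.map_adj⟩⟩

theorem famSaturated_iff_maximal {𝓕 : GraphFam} {α : Type*} {G : SimpleGraph α} :
    FamSaturated 𝓕 G ↔ Maximal (fun G : SimpleGraph α => ∀ F ∈ 𝓕, F.2.Free G) G := by
  simp only [FamSaturated, contains_iff_isContained]
  refine and_congr_right fun _ => ⟨fun hG G' hG' hle u v huv => ?_, fun hG u v hne huv => ?_⟩
  · by_contra hadj
    obtain ⟨F, hF, hcon⟩ := hG u v huv.ne hadj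
    have hedge : G ⊔ edge u v ≤ G' := sup_le hle ((edge_le_iff G').2 (.inr huv))
    exact hG' F hF (hcon.mono_right hedge)
  · by_contra hfree
    simp only [not_exists, not_and] at hfree
    exact (lt_sup_edge G u v hne huv).not_ge (hG hfree le_sup_left)

theorem famSaturated_empty_iff {α : Type*} {G : SimpleGraph α} : FamSaturated ∅ G ↔ G = ⊤ := by
  simp [famSaturated_iff_maximal]

theorem sat_empty {n : ℕ} : sat n ∅ = n.choose 2 := by
  simp only [sat, famSaturated_empty_iff, exists_eq_left, card_edgeSet_top, Nat.card_fin,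
    Set.ofPred_eq_eq_singleton', csInf_singleton]

theorem sat_eq_of_famSaturated {𝓕 : GraphFam} {n : ℕ} {G : SimpleGraph (Fin n)}
    (hG : FamSaturated 𝓕 G)
    (hmin : ∀ G' : SimpleGraph (Fin n), FamSaturated 𝓕 G' →
      Nat.card G.edgeSet ≤ Nat.card G'.edgeSet) : sat n 𝓕 = Nat.card G.edgeSet :=
  le_antisymm (Nat.sInf_le ⟨G, hG, rfl⟩)
    (le_csInf ⟨_, G, hG, rfl⟩ fun _ ⟨G', hG', hm⟩ => hm ▸ hmin G' hG')

end Saturation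

section Containment

variable {α β γ : Type*} {A : SimpleGraph α} {B : SimpleGraph β} {K : SimpleGraph γ}

theorem isContained_of_range_subset (e : A ↪g K) (f : Copy B K)
    (h : Set.range f ⊆ Set.range e) : B ⊑ A := by
  choose g hg using fun b => h ⟨b, rfl⟩
  have hadj : ∀ {b b'}, B.Adj b b' → A.Adj (g b) (g b') := fun hb => by
    rw [← e.map_adj_iff, hg, hg]
    exact f.toHom.map_adj hb
  exact ⟨⟨g, hadj⟩, fun b b' hb => f.injective ((hg b).symm.trans ((congrArg e hb).trans (hg b')))⟩

theorem isContained_or_of_isContained_sum (hB : B.Connected) (h : B ⊑ A ⊕g K) :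
    B ⊑ A ∨ B ⊑ K := by
  obtain ⟨f⟩ := h
  obtain ⟨b⟩ := hB.nonempty
  have hreach (x : β) : (A ⊕g K).Reachable (f b) (f x) := (hB.preconnected b x).map f.toHom
  rcases hb : f b with a | k
  · refine .inl (isContained_of_range_subset Embedding.sumInl f ?_)
    rintro _ ⟨x, rfl⟩
    rcases hx : f x with y | y
    · exact ⟨y, rfl⟩
    · exact absurd (hb ▸ hx ▸ hreach x) (not_reachable_sum_inl_inr a y)
  · refine .inr (isContained_of_range_subset Embedding.sumInr f ?_)
    rintro _ ⟨x, rfl⟩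
    rcases hx : f x with y | y
    · exact absurd (hb ▸ hx ▸ hreach x).symm (not_reachable_sum_inl_inr y k)
    · exact ⟨y, rfl⟩

theorem card_edgeSet_le_of_isContained [Finite A.edgeSet] (h : B ⊑ A) :
    Nat.card B.edgeSet ≤ Nat.card A.edgeSet :=
  have ⟨f⟩ := h
  Nat.card_le_card_of_injective f.mapEdgeSet f.mapEdgeSet.injective

theorem card_edgeSet_sum [Finite A.edgeSet] [Finite B.edgeSet] :
    Nat.card (A ⊕g B).edgeSet = Nat.card A.edgeSet + Nat.card B.edgeSet := by
  rw [Nat.card_congr edgeSetSumEquiv, Nat.card_sum]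

theorem surjective_of_isRegularOfDegree [A.LocallyFinite] [B.LocallyFinite] [Nonempty β] {d : ℕ}
    (hA : A.Preconnected) (hAd : A.IsRegularOfDegree d) (hBd : B.IsRegularOfDegree d)
    (f : Copy B A) : Function.Surjective f := by
  classical
  have hclosed (b : β) {a : α} (hba : A.Adj (f b) a) : a ∈ Set.range f := by
    have hsub : (B.neighborFinset b).map f.toEmbedding ⊆ A.neighborFinset (f b) := by
      intro x hx
      obtain ⟨y, hy, rfl⟩ := Finset.mem_map.1 hx
      exact (mem_neighborFinset ..).2 (f.toHom.map_adj ((mem_neighborFinset ..).1 hy))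
    have heq := Finset.eq_of_subset_of_card_le hsub (by simp [hAd.degree_eq, hBd.degree_eq])
    obtain ⟨y, -, hy⟩ := Finset.mem_map.1 (heq ▸ (mem_neighborFinset ..).2 hba)
    exact ⟨y, hy⟩
  intro a
  have hreach := hA (f (Classical.arbitrary β)) a
  rw [reachable_iff_reflTransGen] at hreach
  induction hreach with
  | refl => exact ⟨_, rfl⟩
  | tail _ hadj ih =>
    obtain ⟨b, rfl⟩ := ih
    exact hclosed b hadj

end Containment

section AddIsolated

variable {α β : Type*}

/-- `A` together with infinitely many isolated vertices: a finite graph is contained in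
`addIsolated A` iff it is contained in `A` up to isolated vertices, however many vertices it has. -/
def addIsolated (A : SimpleGraph α) : SimpleGraph (α ⊕ ℕ) := A ⊕g (⊥ : SimpleGraph ℕ)

variable {A : SimpleGraph α}

@[simp]
theorem addIsolated_adj_inl {a b : α} : (addIsolated A).Adj (.inl a) (.inl b) ↔ A.Adj a b :=
  sum_adj_inl

theorem not_addIsolated_adj_inr {n : ℕ} {z : α ⊕ ℕ} : ¬ (addIsolated A).Adj (.inr n) z := by
  rcases z with z | z <;> simp [addIsolated]

theorem exists_eq_inl_of_addIsolated_adj {p z : α ⊕ ℕ} (h : (addIsolated A).Adj p z) :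
    ∃ a, p = .inl a := by
  rcases p with a | n
  · exact ⟨a, rfl⟩
  · exact absurd h not_addIsolated_adj_inr

theorem addIsolated_ne_bot (hA : A ≠ ⊥) : addIsolated A ≠ ⊥ := by
  obtain ⟨a, b, hab⟩ := ne_bot_iff_exists_adj.1 hA
  exact ne_bot_iff_exists_adj.2 ⟨.inl a, .inl b, addIsolated_adj_inl.2 hab⟩

theorem card_edgeSet_addIsolated [Finite A.edgeSet] :
    Nat.card (addIsolated A).edgeSet = Nat.card A.edgeSet := by
  have : Finite (⊥ : SimpleGraph ℕ).edgeSet := by rw [edgeSet_bot]; infer_instance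
  simpa [addIsolated] using card_edgeSet_sum (A := A) (B := (⊥ : SimpleGraph ℕ))

instance [Finite A.edgeSet] : Finite (addIsolated A).edgeSet :=
  have : Finite (⊥ : SimpleGraph ℕ).edgeSet := by rw [edgeSet_bot]; infer_instance
  .of_equiv _ edgeSetSumEquiv.symm

theorem bot_isContained_addIsolated [Countable β] : (⊥ : SimpleGraph β) ⊑ addIsolated A := by
  obtain ⟨g, hg⟩ := exists_injective_nat β
  exact ⟨⟨Sum.inr ∘ g, False.elim⟩, Sum.inr_injective.comp hg⟩

theorem isContained_of_isContained_addIsolated {B : SimpleGraph β} (hB : B.Connected)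
    (hne : B ≠ ⊥) (h : B ⊑ addIsolated A) : B ⊑ A := by
  refine (isContained_or_of_isContained_sum hB h).resolve_right fun ⟨f⟩ => hne ?_
  exact eq_bot_iff_forall_not_adj.2 fun _ _ hab => f.toHom.map_adj hab

theorem exists_between_addIsolated [Finite α] {n : ℕ} (hn : Nat.card α ≤ n) :
    ∃ G : SimpleGraph (Fin n), A ⊑ G ∧ G ⊑ addIsolated A := by
  have := Fintype.ofFinite α
  let A' := A ⊕g (⊥ : SimpleGraph (Fin (n - Nat.card α)))
  have hcard : Fintype.card (α ⊕ Fin (n - Nat.card α)) = n := by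
    rw [Fintype.card_sum, Fintype.card_fin, ← Nat.card_eq_fintype_card, Nat.add_sub_cancel' hn]
  have hcontained : A' ⊑ addIsolated A :=
    ⟨⟨Sum.map id Fin.val, by rintro (a | a) (b | b) <;> simp [A', addIsolated]⟩,
      Function.Injective.sumMap Function.injective_id Fin.val_injective⟩
  exact ⟨A'.overFin hcard, ⟨((A'.overFinIso hcard).toEmbedding.comp Embedding.sumInl).toCopy⟩,
    IsContained.trans ⟨(A'.overFinIso hcard).symm.toCopy⟩ hcontained⟩

end AddIsolated

section MaximalSubgraph

variable {V γ : Type*} {G : SimpleGraph V} {K : SimpleGraph γ}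

theorem comap_le_of_maximal (hG : Maximal (· ⊑ K) G) (g : V ↪ γ) (hg : G ≤ K.comap g) :
    K.comap g ≤ G :=
  hG.2 ⟨⟨g, id⟩, g.injective⟩ hg

theorem adj_of_maximal (hG : Maximal (· ⊑ K) G) (f : Copy G K) {a b : V}
    (hab : K.Adj (f a) (f b)) : G.Adj a b :=
  comap_le_of_maximal hG f.toEmbedding (fun _ _ => f.toHom.map_adj) hab

theorem adj_of_maximal_of_exchange (hG : Maximal (· ⊑ K) G) (f : Copy G K) {a b : V} {q : γ}
    (hq : q ∉ Set.range f) (hdom : ∀ z ≠ q, K.Adj (f a) z → K.Adj q z) (hab : a ≠ b)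
    (hqb : K.Adj q (f b)) : G.Adj a b := by
  classical
  have hne (c : V) : f c ≠ q := fun hc => hq ⟨c, hc⟩
  -- Rerouting `a` to the unoccupied vertex `q` still embeds `G`, and it sends `ab` to an edge.
  let g := f.toEmbedding.setValue a q
  have hga : g a = q := f.toEmbedding.setValue_eq a q
  have hg {c : V} (hc : c ≠ a) : g c = f c := f.toEmbedding.setValue_eq_of_ne hc (hne c)
  have hle : G ≤ K.comap g := by
    intro c d hcd
    rw [comap_adj]
    rcases eq_or_ne c a with rfl | hca
    · rw [hga, hg hcd.ne']
      exact hdom _ (hne d) (f.toHom.map_adj hcd)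
    rcases eq_or_ne d a with rfl | hda
    · rw [hga, hg hca]
      exact (hdom _ (hne c) (f.toHom.map_adj hcd.symm)).symm
    · rw [hg hca, hg hda]
      exact f.toHom.map_adj hcd
  exact comap_le_of_maximal hG g hle (by rwa [comap_adj, hga, hg hab.symm])

theorem ne_bot_of_maximal [Nontrivial V] (hG : Maximal (· ⊑ K) G) (hK : K ≠ ⊥) : G ≠ ⊥ := by
  classical
  rintro rfl
  obtain ⟨f⟩ := hG.prop
  obtain ⟨p, q, hpq⟩ := ne_bot_iff_exists_adj.1 hK
  obtain ⟨a, b, hab⟩ := exists_pair_ne V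
  let g := (f.toEmbedding.setValue a p).setValue b q
  have hga : g a = p := by
    have hp : f.toEmbedding.setValue a p a = p := f.toEmbedding.setValue_eq a p
    exact (Function.Embedding.setValue_eq_of_ne hab (hp.trans_ne hpq.ne)).trans hp
  have hgb : g b = q := Function.Embedding.setValue_eq ..
  exact comap_le_of_maximal hG g bot_le (show K.Adj (g a) (g b) by rwa [hga, hgb])

end MaximalSubgraph

section MaximalSubgraphAddIsolated

variable {V α : Type*} {G : SimpleGraph V} {A : SimpleGraph α}

theorem eq_top_of_isUniversal_notMem_range (hA : A ≠ ⊥)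
    (hG : Maximal (· ⊑ addIsolated A) G) (f : Copy G (addIsolated A)) {u : α}
    (hu : A.IsUniversal u) (huf : .inl u ∉ Set.range f) : G = ⊤ := by
  rcases subsingleton_or_nontrivial V with _ | _
  · exact Subsingleton.elim _ _
  have hadj {a b : V} {y : α} (hb : f b = .inl y) (hab : a ≠ b) : G.Adj a b := by
    refine adj_of_maximal_of_exchange hG f huf (fun z hz haz => ?_) hab ?_
    · obtain ⟨z, rfl⟩ := exists_eq_inl_of_addIsolated_adj haz.symm
      exact addIsolated_adj_inl.2 (hu fun h => hz (congrArg _ h.symm))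
    · rw [hb, addIsolated_adj_inl]
      exact hu fun h => huf ⟨b, hb.trans (congrArg _ h.symm)⟩
  obtain ⟨c, d, hcd⟩ := ne_bot_iff_exists_adj.1 (ne_bot_of_maximal hG (addIsolated_ne_bot hA))
  obtain ⟨x, hx⟩ := exists_eq_inl_of_addIsolated_adj (f.toHom.map_adj hcd)
  have hinl (a : V) : ∃ y, f a = .inl y := by
    rcases eq_or_ne a c with rfl | hac
    · exact ⟨x, hx⟩
    · exact exists_eq_inl_of_addIsolated_adj (f.toHom.map_adj (hadj hx hac))
  exact eq_top_iff_forall_ne_adj.2 fun a b hab => hadj (hinl b).choose_spec hab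

theorem isUniversal_of_maximal_of_notMem_range
    (hG : Maximal (· ⊑ addIsolated A) G) (f : Copy G (addIsolated A)) {u w : α} {b : V}
    (hu : A.IsUniversal u) (hb : f b = .inl u) (hw : .inl w ∉ Set.range f) : G.IsUniversal b := by
  intro a hba
  rcases ha : f a with x | n
  · have hne : u ≠ x := fun h => hba (f.injective (hb.trans (h ▸ ha.symm)))
    exact adj_of_maximal hG f (by rw [ha, hb, addIsolated_adj_inl]; exact hu hne)
  · have hne : u ≠ w := fun h => hw ⟨b, h ▸ hb⟩
    have hdom (z) (_ : z ≠ .inl w) (haz : (addIsolated A).Adj (f a) z) :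
        (addIsolated A).Adj (.inl w) z := absurd (ha ▸ haz) not_addIsolated_adj_inr
    refine (adj_of_maximal_of_exchange hG f hw hdom hba.symm ?_).symm
    rw [hb, addIsolated_adj_inl]
    exact (hu hne).symm

theorem isContained_or_le_ncard_universalVerts_of_maximal [Finite V] {t : ℕ} (hA : A ≠ ⊥)
    (htA : t ≤ A.universalVerts.ncard) (htV : t ≤ Nat.card V)
    (hG : Maximal (· ⊑ addIsolated A) G) : A ⊑ G ∨ t ≤ G.universalVerts.ncard := by
  obtain ⟨f⟩ := hG.prop
  by_cases hall : Set.range Sum.inl ⊆ Set.range f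
  · let e : G ↪g addIsolated A :=
      ⟨f.toEmbedding, fun {_ _} => ⟨adj_of_maximal hG f, f.toHom.map_adj⟩⟩
    let i : Copy A (addIsolated A) := Embedding.sumInl.toCopy
    exact .inl (isContained_of_range_subset e i hall)
  obtain ⟨_, ⟨w, rfl⟩, hw⟩ := Set.not_subset.1 hall
  right
  by_cases huniv : Sum.inl '' A.universalVerts ⊆ Set.range f
  · have hsub : Sum.inl '' A.universalVerts ⊆ f '' G.universalVerts := by
      rintro _ ⟨u, hu, rfl⟩
      obtain ⟨b, hb⟩ := huniv ⟨u, hu, rfl⟩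
      exact ⟨b, isUniversal_of_maximal_of_notMem_range hG f hu hb hw, hb⟩
    calc t ≤ A.universalVerts.ncard := htA
      _ = (Sum.inl '' A.universalVerts).ncard :=
          (Set.ncard_image_of_injective _ Sum.inl_injective).symm
      _ ≤ (f '' G.universalVerts).ncard := Set.ncard_le_ncard hsub (Set.toFinite _)
      _ = G.universalVerts.ncard := Set.ncard_image_of_injective _ f.injective
  · obtain ⟨_, ⟨u, hu, rfl⟩, huf⟩ := Set.not_subset.1 huniv
    have htop : G = ⊤ := eq_top_of_isUniversal_notMem_range hA hG f hu huf
    have huniv : G.universalVerts = Set.univ :=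
      Set.eq_univ_of_forall (eq_top_iff_forall_isUniversal.1 htop)
    rwa [huniv, Set.ncard_univ]

theorem ncard_universalVerts_mul_le [Finite V] :
    G.universalVerts.ncard * (Nat.card V - 1) ≤ 2 * Nat.card G.edgeSet := by
  classical
  have := Fintype.ofFinite V
  calc G.universalVerts.ncard * (Nat.card V - 1)
      = ∑ v ∈ G.universalVerts.toFinset, G.degree v := by
        have hdeg (v) (hv : v ∈ G.universalVerts.toFinset) : G.degree v = Nat.card V - 1 := by
          rw [(G.degree_eq_card_sub_one v).2 (Set.mem_toFinset.1 hv), Nat.card_eq_fintype_card]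
        rw [Finset.sum_congr rfl hdeg, Finset.sum_const, smul_eq_mul, Set.ncard_eq_toFinset_card']
    _ ≤ ∑ v, G.degree v := Finset.sum_le_univ_sum_of_nonneg fun _ => Nat.zero_le _
    _ = 2 * Nat.card G.edgeSet := by
        rw [sum_degrees_eq_twice_card_edges, edgeFinset_card, Nat.card_eq_fintype_card]

end MaximalSubgraphAddIsolated

section Hosted

variable {ι : Type*} {W : ι → Type*}

/-- `G` is *hosted* by the graphs `A i` at level `m`: up to isolated vertices, `G` is a subgraph of
some `A i` with at least `m` edges. -/
def IsHosted (A : ∀ i, SimpleGraph (W i)) (m : ℕ) {V : Type*} (G : SimpleGraph V) : Prop :=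
  ∃ i, m ≤ Nat.card (A i).edgeSet ∧ G ⊑ addIsolated (A i)

/-- The forbidden family realizing `s` from `n₀` on: a graph on `n ≥ n₀` vertices is forbidden iff
it is not hosted at level `s n`. -/
def unhostedFam (A : ∀ i, SimpleGraph (W i)) (s : ℕ → ℕ) (n₀ : ℕ) : GraphFam :=
  {F | n₀ ≤ F.1 ∧ ¬ IsHosted A (s F.1) F.2}

variable {A : ∀ i, SimpleGraph (W i)} {V : Type*} {G : SimpleGraph V} {m n n₀ t : ℕ}
  {s : ℕ → ℕ}

theorem IsHosted.of_isContained {m' : ℕ} {V' : Type*} {F : SimpleGraph V'}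
    (hG : IsHosted A m G) (hm : m' ≤ m) (hF : F ⊑ G) : IsHosted A m' F :=
  have ⟨i, hi, hcon⟩ := hG
  ⟨i, hm.trans hi, hF.trans hcon⟩

theorem forall_free_unhostedFam_iff (hs : MonotoneOn s (Set.Ici n₀)) (hn : n₀ ≤ n)
    {G : SimpleGraph (Fin n)} :
    (∀ F ∈ unhostedFam A s n₀, F.2.Free G) ↔ IsHosted A (s n) G := by
  refine ⟨fun hfree => ?_, fun hG F ⟨hF, hunhosted⟩ hcon => hunhosted ?_⟩
  · by_contra hG
    exact hfree ⟨n, G⟩ ⟨hn, hG⟩ (.refl G)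
  · have hle : F.1 ≤ n := by
      obtain ⟨f⟩ := hcon
      simpa using Fintype.card_le_of_embedding f.toEmbedding
    exact hG.of_isContained (hs hF hn hle) hcon

theorem famSaturated_unhostedFam_iff (hs : MonotoneOn s (Set.Ici n₀)) (hn : n₀ ≤ n)
    {G : SimpleGraph (Fin n)} :
    FamSaturated (unhostedFam A s n₀) G ↔ Maximal (IsHosted A (s n)) G := by
  simp only [famSaturated_iff_maximal, forall_free_unhostedFam_iff hs hn]

theorem one_le_card_edgeSet_of_mem_unhostedFam {F : (n : ℕ) × SimpleGraph (Fin n)}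
    (hA : ∀ m, ∃ i, m ≤ Nat.card (A i).edgeSet) (hF : F ∈ unhostedFam A s n₀) :
    1 ≤ Nat.card F.2.edgeSet := by
  rw [Nat.one_le_iff_ne_zero]
  intro h
  obtain ⟨i, hi⟩ := hA (s F.1)
  have hbot : F.2 = ⊥ := by
    rwa [Finite.card_eq_zero_iff, Set.isEmpty_coe_sort, edgeSet_eq_empty] at h
  exact hF.2 ⟨i, hi, hbot ▸ bot_isContained_addIsolated⟩

theorem exists_maximal_isHosted (hA : ∀ i j, A i ⊑ addIsolated (A j) → i = j) {i : ι}
    [Finite (W i)] (hn : Nat.card (W i) ≤ n) :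
    ∃ G : SimpleGraph (Fin n), Maximal (IsHosted A (Nat.card (A i).edgeSet)) G ∧
      Nat.card G.edgeSet = Nat.card (A i).edgeSet := by
  obtain ⟨G, hAG, hGA⟩ := exists_between_addIsolated (A := A i) hn
  have hcard {G' : SimpleGraph (Fin n)} (hG' : G' ⊑ addIsolated (A i)) :
      Nat.card G'.edgeSet ≤ Nat.card (A i).edgeSet :=
    card_edgeSet_addIsolated (A := A i) ▸ card_edgeSet_le_of_isContained hG'
  have hGcard := (hcard hGA).antisymm (card_edgeSet_le_of_isContained hAG)
  refine ⟨G, ⟨⟨i, le_rfl, hGA⟩, fun G' ⟨j, _, hG'⟩ hle => ?_⟩, hGcard⟩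
  obtain rfl := hA i j ((hAG.mono_right hle).trans hG')
  exact (edgeSet_inj.1 (Set.eq_of_subset_of_ncard_le (edgeSet_mono hle)
    ((hcard hG').trans hGcard.ge))).ge

theorem le_card_edgeSet_of_maximal_isHosted [Finite V]
    (htA : ∀ i, t ≤ (A i).universalVerts.ncard) (htV : t ≤ Nat.card V)
    (hm : 2 * m ≤ t * (Nat.card V - 1)) (hG : Maximal (IsHosted A m) G) :
    m ≤ Nat.card G.edgeSet := by
  obtain ⟨i, hi, hGi⟩ := hG.prop
  rcases m.eq_zero_or_pos with rfl | hpos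
  · exact Nat.zero_le _
  have hne : A i ≠ ⊥ := by
    intro hbot
    exact absurd (hpos.trans_le hi) (by simp [hbot])
  have hmax : Maximal (· ⊑ addIsolated (A i)) G :=
    ⟨hGi, fun G' hG' hle => hG.2 ⟨i, hi, hG'⟩ hle⟩
  rcases isContained_or_le_ncard_universalVerts_of_maximal hne (htA i) htV hmax with h | h
  · exact hi.trans (card_edgeSet_le_of_isContained h)
  · refine Nat.le_of_mul_le_mul_left ?_ two_pos
    calc 2 * m ≤ t * (Nat.card V - 1) := hm
      _ ≤ G.universalVerts.ncard * (Nat.card V - 1) := Nat.mul_le_mul_right _ h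
      _ ≤ 2 * Nat.card G.edgeSet := ncard_universalVerts_mul_le

theorem sat_unhostedFam (hs : MonotoneOn s (Set.Ici n₀)) (hn : n₀ ≤ n)
    (hA : ∀ i j, A i ⊑ addIsolated (A j) → i = j) (htA : ∀ i, t ≤ (A i).universalVerts.ncard)
    (htn : t ≤ n) (hsn : 2 * s n ≤ t * (n - 1)) {i : ι} [Finite (W i)]
    (hi : Nat.card (A i).edgeSet = s n) (hin : Nat.card (W i) ≤ n) :
    sat n (unhostedFam A s n₀) = s n := by
  obtain ⟨G, hG, hcard⟩ := exists_maximal_isHosted hA hin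
  rw [hi] at hG hcard
  rw [← hcard]
  refine sat_eq_of_famSaturated ((famSaturated_unhostedFam_iff hs hn).2 hG) fun G' hG' => ?_
  rw [hcard]
  exact le_card_edgeSet_of_maximal_isHosted htA (by simpa using htn) (by simpa using hsn)
    ((famSaturated_unhostedFam_iff hs hn).1 hG')

end Hosted

section CliqueJoin

variable {U V W : Type*}

/-- The join of the complete graph on `U`, the *hubs*, with the graph `X`. -/
def cliqueJoin (U : Type*) (X : SimpleGraph W) : SimpleGraph (U ⊕ W) :=
  ((⊤ : SimpleGraph U) ⊕g X) ⊔ completeBipartiteGraph U W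

variable {X : SimpleGraph V} {Y : SimpleGraph W}

theorem isUniversal_cliqueJoin_inl (u : U) : (cliqueJoin U X).IsUniversal (.inl u) := by
  rintro (v | v) h <;> simp_all [cliqueJoin]

theorem cliqueJoin_adj_inr {v v' : V} :
    (cliqueJoin U X).Adj (.inr v) (.inr v') ↔ X.Adj v v' := by
  simp [cliqueJoin]

/-- The inclusion of `X` into its join with a complete graph. -/
def cliqueJoinInr : X ↪g cliqueJoin U X :=
  ⟨Function.Embedding.inr, cliqueJoin_adj_inr⟩

theorem card_le_ncard_universalVerts_cliqueJoin [Finite U] [Finite V] :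
    Nat.card U ≤ (cliqueJoin U X).universalVerts.ncard := by
  rw [← Set.ncard_univ, ← Set.ncard_image_of_injective _ (Sum.inl_injective (β := V))]
  refine Set.ncard_le_ncard ?_
  rintro _ ⟨u, -, rfl⟩
  exact isUniversal_cliqueJoin_inl u

theorem ncard_neighborSet_cliqueJoin_inr [Finite U] [Finite V] (v : V) :
    ((cliqueJoin U X).neighborSet (.inr v)).ncard = Nat.card U + (X.neighborSet v).ncard := by
  have hdisj : Disjoint (Sum.inl '' (Set.univ : Set U)) (Sum.inr '' X.neighborSet v) :=
    Set.disjoint_image_inl_image_inr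
  have hunion : (cliqueJoin U X).neighborSet (.inr v) =
      Sum.inl '' Set.univ ∪ Sum.inr '' X.neighborSet v := by
    ext (u | v') <;> simp [cliqueJoin]
  rw [hunion, Set.ncard_union_eq hdisj, Set.ncard_image_of_injective _ Sum.inl_injective,
    Set.ncard_image_of_injective _ Sum.inr_injective, Set.ncard_univ]

theorem card_edgeSet_cliqueJoin [Finite U] [Finite V] :
    Nat.card (cliqueJoin U X).edgeSet =
      (Nat.card U).choose 2 + Nat.card X.edgeSet + Nat.card U * Nat.card V := by
  have hdisj :
      Disjoint ((⊤ : SimpleGraph U) ⊕g X).edgeSet (completeBipartiteGraph U V).edgeSet := by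
    rw [disjoint_edgeSet, disjoint_iff_inf_le]
    rintro (u | v) (u' | v') <;> simp
  have hbip : (completeBipartiteGraph U V).edgeSet.ncard = Nat.card U * Nat.card V := by
    rw [Set.ncard, encard_edgeSet_completeBipartiteGraph, ENat.toNat_mul]; rfl
  rw [cliqueJoin, edgeSet_sup, Nat.card_coe_set_eq, Set.ncard_union_eq hdisj, hbip,
    ← Nat.card_coe_set_eq, card_edgeSet_sum, card_edgeSet_top]

theorem card_sum_le_of_card_edgeSet_cliqueJoin_le [Finite U] [Finite V] {n : ℕ}
    (hU : 0 < Nat.card U) (hn : 2 * Nat.card U ≤ n)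
    (h : 2 * Nat.card (cliqueJoin U X).edgeSet ≤ Nat.card U * (n - 1)) :
    Nat.card (U ⊕ V) ≤ n := by
  have hV : 2 * Nat.card V ≤ n - 1 := by
    refine Nat.le_of_mul_le_mul_left ?_ hU
    rw [card_edgeSet_cliqueJoin] at h
    linarith
  rw [Nat.card_sum]
  omega

theorem exists_eq_inl_of_copy_cliqueJoin [Finite U] [Finite V] [Finite W]
    (hdeg : ∀ w, (Y.neighborSet w).ncard + 1 < Nat.card V)
    (f : Copy (cliqueJoin U X) (cliqueJoin U Y)) (u : U) : ∃ u', f (.inl u) = .inl u' := by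
  rcases hfu : f (.inl u) with u' | w
  · exact ⟨u', rfl⟩
  have hle : Nat.card U + Nat.card V - 1 ≤ Nat.card U + (Y.neighborSet w).ncard :=
    calc Nat.card U + Nat.card V - 1
        = ((cliqueJoin U X).neighborSet (.inl u)).ncard := by
          rw [(isUniversal_cliqueJoin_inl u).neighborSet_eq, Set.ncard_compl,
            Set.ncard_singleton, Nat.card_sum]
      _ = (f '' (cliqueJoin U X).neighborSet (.inl u)).ncard :=
          (Set.ncard_image_of_injective _ f.injective).symm
      _ ≤ ((cliqueJoin U Y).neighborSet (.inr w)).ncard :=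
          Set.ncard_le_ncard (Set.image_subset_iff.2 fun v hv => hfu ▸ f.toHom.map_adj hv)
      _ = Nat.card U + (Y.neighborSet w).ncard := ncard_neighborSet_cliqueJoin_inr w
  have := hdeg w
  omega

theorem isContained_of_cliqueJoin_isContained [Finite U] [Finite V] [Finite W]
    (hdeg : ∀ w, (Y.neighborSet w).ncard + 1 < Nat.card V)
    (h : cliqueJoin U X ⊑ cliqueJoin U Y) : X ⊑ Y := by
  obtain ⟨f⟩ := h
  choose g hg using exists_eq_inl_of_copy_cliqueJoin hdeg f
  have hg_inj : Function.Injective g := fun u u' h =>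
    Sum.inl_injective (f.injective ((hg u).trans ((congrArg _ h).trans (hg u').symm)))
  refine isContained_of_range_subset cliqueJoinInr (f.comp cliqueJoinInr.toCopy) ?_
  rintro _ ⟨v, rfl⟩
  rcases hfv : f (.inr v) with u | w
  · obtain ⟨u', rfl⟩ := Finite.surjective_of_injective hg_inj u
    exact absurd (f.injective ((hg u').trans hfv.symm)) Sum.inl_ne_inr
  · exact ⟨w, hfv.symm⟩

end CliqueJoin

section TwoCycles

/-- The disjoint union of two cycles of lengths `a + 3` and `k + 3` and `k` isolated vertices. The
isolated vertices tune the number of edges of its join with a clique. -/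
def twoCycles (a k : ℕ) : SimpleGraph ((Fin (a + 3) ⊕ Fin (k + 3)) ⊕ Fin k) :=
  (cycleGraph (a + 3) ⊕g cycleGraph (k + 3)) ⊕g ⊥

variable {a k : ℕ}

theorem isRegularOfDegree_two_cycleGraph : (cycleGraph (a + 3)).IsRegularOfDegree 2 :=
  fun _ => cycleGraph_degree_three_le

theorem card_edgeSet_cycleGraph : Nat.card (cycleGraph (a + 3)).edgeSet = a + 3 := by
  have hsum := (cycleGraph (a + 3)).sum_degrees_eq_twice_card_edges
  simp only [cycleGraph_degree_three_le, Finset.sum_const, Finset.card_univ, Fintype.card_fin,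
    smul_eq_mul] at hsum
  rw [Nat.card_eq_fintype_card, ← edgeFinset_card]
  omega

theorem card_edgeSet_twoCycles : Nat.card (twoCycles a k).edgeSet = a + k + 6 := by
  rw [twoCycles, card_edgeSet_sum, card_edgeSet_sum, card_edgeSet_cycleGraph,
    card_edgeSet_cycleGraph, edgeSet_bot, Nat.card_of_isEmpty]
  omega

theorem ncard_neighborSet_twoCycles_le (x) : ((twoCycles a k).neighborSet x).ncard ≤ 2 := by
  have hcycle {b : ℕ} (y : Fin (b + 3)) : ((cycleGraph (b + 3)).neighborSet y).ncard = 2 := by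
    rw [← Nat.card_coe_set_eq, Nat.card_eq_fintype_card, card_neighborSet_eq_degree,
      cycleGraph_degree_three_le]
  rcases x with (x | x) | x <;>
    simp [twoCycles, neighborSet_sum_inl, neighborSet_sum_inr,
      Set.ncard_image_of_injective _ Sum.inl_injective,
      Set.ncard_image_of_injective _ Sum.inr_injective, hcycle]

theorem cycleGraph_isContained_cycleGraph_iff {b : ℕ} :
    cycleGraph (b + 3) ⊑ cycleGraph (a + 3) ↔ b = a := by
  refine ⟨fun ⟨f⟩ => ?_, fun h => h ▸ .refl _⟩
  have hsurj := surjective_of_isRegularOfDegree cycleGraph_preconnected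
    isRegularOfDegree_two_cycleGraph isRegularOfDegree_two_cycleGraph f
  simpa using Fintype.card_of_bijective ⟨f.injective, hsurj⟩

theorem cycleGraph_isContained_twoCycles {b : ℕ} (h : cycleGraph (b + 3) ⊑ twoCycles a k) :
    b = a ∨ b = k := by
  rcases isContained_or_of_isContained_sum cycleGraph_connected h with h | h
  · exact (isContained_or_of_isContained_sum cycleGraph_connected h).imp
      cycleGraph_isContained_cycleGraph_iff.1 cycleGraph_isContained_cycleGraph_iff.1
  · have hadj : (cycleGraph (b + 3)).Adj 0 1 := by simp [cycleGraph_adj]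
    obtain ⟨f⟩ := h
    exact (f.toHom.map_adj hadj).elim

theorem eq_of_twoCycles_isContained {a' k' : ℕ} (hak' : a ≠ k') (hka' : k ≠ a')
    (h : twoCycles a k ⊑ twoCycles a' k') : a = a' ∧ k = k' := by
  have ha : cycleGraph (a + 3) ⊑ twoCycles a k :=
    ⟨(Embedding.sumInl.comp Embedding.sumInl).toCopy⟩
  have hk : cycleGraph (k + 3) ⊑ twoCycles a k :=
    ⟨(Embedding.sumInl.comp Embedding.sumInr).toCopy⟩
  exact ⟨(cycleGraph_isContained_twoCycles (ha.trans h)).resolve_right hak',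
    (cycleGraph_isContained_twoCycles (hk.trans h)).resolve_left hka'⟩

end TwoCycles

section Host

/-- The hosts with `t` hubs: the joins of a `t`-clique with two cycles, the second of length at most
`t + 3` and the first longer than that, and a number of isolated vertices. -/
def host (t : ℕ) (i : ℕ × Fin (t + 1)) :
    SimpleGraph (Fin t ⊕ ((Fin (t + 1 + i.1 + 3) ⊕ Fin (i.2 + 3)) ⊕ Fin i.2)) :=
  cliqueJoin (Fin t) (twoCycles (t + 1 + i.1) i.2)

variable {t : ℕ}

theorem eq_of_host_isContained_addIsolated (ht : 0 < t) (i j : ℕ × Fin (t + 1))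
    (h : host t i ⊑ addIsolated (host t j)) : i = j := by
  have huniv := isUniversal_cliqueJoin_inl (X := twoCycles (t + 1 + i.1) i.2) (⟨0, ht⟩ : Fin t)
  have hne : host t i ≠ ⊥ := ne_bot_iff_exists_adj.2 ⟨_, .inr (.inl (.inl 0)), huniv (by simp)⟩
  have hcycles : twoCycles (t + 1 + i.1) i.2 ⊑ twoCycles (t + 1 + j.1) j.2 := by
    refine isContained_of_cliqueJoin_isContained (U := Fin t) (fun w => ?_)
      (isContained_of_isContained_addIsolated (.of_isUniversal huniv) hne h)
    have := ncard_neighborSet_twoCycles_le w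
    simp only [Nat.card_eq_fintype_card, Fintype.card_sum, Fintype.card_fin]
    omega
  obtain ⟨h₁, h₂⟩ := eq_of_twoCycles_isContained (by omega) (by omega) hcycles
  exact Prod.ext (by omega) (Fin.ext h₂)

theorem card_edgeSet_host (i : ℕ × Fin (t + 1)) :
    Nat.card (host t i).edgeSet + i.2 = t.choose 2 + (t + 1) * (t + 1 + i.1 + 2 * i.2 + 6) := by
  rw [host, card_edgeSet_cliqueJoin, card_edgeSet_twoCycles]
  simp only [Nat.card_eq_fintype_card, Fintype.card_sum, Fintype.card_fin]
  ring

theorem exists_card_edgeSet_host_eq {m : ℕ} (hm : t.choose 2 + (t + 1) * (3 * t + 7) ≤ m) :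
    ∃ i, Nat.card (host t i).edgeSet = m := by
  obtain ⟨M, rfl⟩ := Nat.exists_eq_add_of_le (le_of_add_le_left hm)
  -- A host with `k` isolated vertices has `t.choose 2 + (t + 1) * q - k` edges for some `q`, so
  -- `q` is `M / (t + 1)` rounded up, and `k = t - r` is the excess of `(t + 1) * q` over `M`.
  set q := (M + t) / (t + 1)
  set r := (M + t) % (t + 1)
  have hdiv : (t + 1) * q + r = M + t := Nat.div_add_mod _ _
  have hr : r < t + 1 := Nat.mod_lt _ t.succ_pos
  have hq : 3 * t + 7 ≤ q := by
    rw [Nat.le_div_iff_mul_le (by omega), mul_comm]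
    omega
  refine ⟨(q - (t + 1) - 2 * (t - r) - 6, ⟨t - r, by omega⟩), ?_⟩
  have hedges := card_edgeSet_host (t := t) (q - (t + 1) - 2 * (t - r) - 6, ⟨t - r, by omega⟩)
  have hqe : t + 1 + (q - (t + 1) - 2 * (t - r) - 6) + 2 * (t - r) + 6 = q := by omega
  simp only [hqe] at hedges
  omega

theorem le_ncard_universalVerts_host (i : ℕ × Fin (t + 1)) :
    t ≤ (host t i).universalVerts.ncard := by
  simpa [host] using card_le_ncard_universalVerts_cliqueJoin (U := Fin t)
    (X := twoCycles (t + 1 + i.1) i.2)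

end Host

theorem exists_graphFam_sat_eq {t n₀ : ℕ} {s : ℕ → ℕ} (ht : 0 < t) (htn : 2 * t ≤ n₀)
    (hs : MonotoneOn s (Set.Ici n₀))
    (hlow : ∀ n ≥ n₀, t.choose 2 + (t + 1) * (3 * t + 7) ≤ s n)
    (hupp : ∀ n ≥ n₀, 2 * s n ≤ t * (n - 1)) :
    ∃ 𝓕 : GraphFam, 𝓕.Nonempty ∧ (∀ F ∈ 𝓕, 1 ≤ Nat.card F.2.edgeSet) ∧
      ∀ n ≥ n₀, sat n 𝓕 = s n := by
  have hsat (n) (hn : n ≥ n₀) : sat n (unhostedFam (host t) s n₀) = s n := by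
    obtain ⟨i, hi⟩ := exists_card_edgeSet_host_eq (hlow n hn)
    refine sat_unhostedFam hs hn (eq_of_host_isContained_addIsolated ht)
      le_ncard_universalVerts_host (by omega) (hupp n hn) hi ?_
    refine card_sum_le_of_card_edgeSet_cliqueJoin_le (X := twoCycles (t + 1 + i.1) i.2)
      (by simpa using ht) (by simpa using htn.trans hn) ?_
    rw [← host, hi, Nat.card_fin]
    exact hupp n hn
  refine ⟨unhostedFam (host t) s n₀, ?_, fun F => ?_, hsat⟩
  · by_contra hempty
    have hcomplete := hsat n₀ le_rfl
    rw [Set.not_nonempty_iff_eq_empty.1 hempty, sat_empty] at hcomplete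
    have htwice : 2 * n₀.choose 2 = n₀ * (n₀ - 1) := by
      rw [Nat.choose_two_right, Nat.mul_div_cancel' (Nat.even_mul_pred_self n₀).two_dvd]
    have hle : n₀ * (n₀ - 1) ≤ t * (n₀ - 1) := htwice ▸ hcomplete ▸ hupp n₀ le_rfl
    exact absurd (Nat.le_of_mul_le_mul_right hle (by omega)) (by omega)
  · refine one_le_card_edgeSet_of_mem_unhostedFam fun m => ?_
    obtain ⟨i, hi⟩ := exists_card_edgeSet_host_eq (t := t) (Nat.le_add_right _ m)
    exact ⟨i, hi ▸ Nat.le_add_left _ _⟩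

theorem exists_pos_eventually_two_mul_toNat_le {s : ℕ → ℤ} {C : ℝ}
    (hC : ∀ n : ℕ, 1 ≤ n → (s n : ℝ) ≤ C * n) :
    ∃ t, 0 < t ∧ ∀ᶠ n : ℕ in atTop, 2 * (s n).toNat ≤ t * (n - 1) := by
  obtain ⟨c, hc⟩ := exists_nat_ge C
  refine ⟨4 * (c + 1), by omega, ?_⟩
  filter_upwards [eventually_ge_atTop 2] with n hn
  have hreal : (s n : ℝ) ≤ c * n :=
    (hC n (by omega)).trans (mul_le_mul_of_nonneg_right hc n.cast_nonneg)
  have hle : (s n).toNat ≤ c * n := Int.toNat_le.2 (by exact_mod_cast hreal)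
  obtain ⟨k, rfl⟩ := Nat.exists_eq_add_of_le' hn
  simp only [Nat.add_one_sub_one]
  nlinarith

/-- Every sequence of integers that is `O(n)`, eventually non-decreasing and tends to infinity is
eventually equal to `sat(·,𝓕)` for some family `𝓕`. -/
theorem stmt6 (s : ℕ → ℤ)
    (h1 : ∃ C : ℝ, ∀ n : ℕ, 1 ≤ n → (s n : ℝ) ≤ C * n)
    (h2 : ∀ᶠ n : ℕ in atTop, s n ≤ s (n + 1))
    (h3 : Tendsto s atTop atTop) :
    ∃ 𝓕 : GraphFam, 𝓕.Nonempty ∧ (∀ F ∈ 𝓕, 1 ≤ Nat.card F.2.edgeSet) ∧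
      ∀ᶠ n : ℕ in atTop, (sat n 𝓕 : ℤ) = s n := by
  obtain ⟨C, hC⟩ := h1
  obtain ⟨t, ht, hupp⟩ := exists_pos_eventually_two_mul_toNat_le hC
  have hlow := h3.eventually_ge_atTop ↑(t.choose 2 + (t + 1) * (3 * t + 7))
  obtain ⟨n₀, hn₀⟩ := eventually_atTop.1
    (h2.and (hupp.and (hlow.and (eventually_ge_atTop (2 * t)))))
  choose hstep hupp hlow hn using hn₀
  have hmono : MonotoneOn (fun n => (s n).toNat) (Set.Ici n₀) :=
    monotoneOn_nat_Ici_of_le_succ fun n hn => Int.toNat_le_toNat (hstep n hn)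
  obtain ⟨𝓕, hne, hedge, hsat⟩ := exists_graphFam_sat_eq ht (hn n₀ le_rfl) hmono
    (fun n hn => Int.ofNat_le.1 ((hlow n hn).trans (Int.self_le_toNat _))) hupp
  refine ⟨𝓕, hne, hedge, eventually_atTop.2 ⟨n₀, fun n hn => ?_⟩⟩
  rw [hsat n hn, Int.toNat_of_nonneg ((Int.natCast_nonneg _).trans (hlow n hn))]
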